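/- Let k be any field and let A = k[X,Y,Z]/(XY − Z(Z+1)) be the coordinate ring of the smooth affine quadric Q₂. Then there exists a sequence (ν_n)_{n∈ℕ} of surjective k-algebra homomorphisms ν_n : A → k[T] (closed embeddings of the affine line 𝔸¹ into Q₂, whose images are closed curves isomorphic to 𝔸¹) such that: (i) for all m ≠ n there is no k-algebra automorphism α of A with α(ker ν_m) = ker ν_n (so the corresponding curves are pairwise non-equivalent under automorphisms of Q₂); and (ii) for each n, whenever α is a k-algebra automorphism of A and β is a k-algebra automorphism of k[T] satisfying β ∘ ν_n = ν_n ∘ α, then β is the identity (so the identity is the only automorphism of each curve that extends to an automorphism of Q₂). -/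

import Mathlib

open MvPolynomial

noncomputable section

/-- The polynomial `X*Y - Z*(Z+1)` defining the smooth quadric `Q₂` inside `𝔸³`
(variables: `0 = X`, `1 = Y`, `2 = Z`). -/
def q2Rel (k : Type*) [Field k] : MvPolynomial (Fin 3) k := X 0 * X 1 - X 2 * (X 2 + 1)

/-- The coordinate ring `A = k[X,Y,Z]/(XY - Z(Z+1))` of the smooth quadric `Q₂`. -/
abbrev Q2Ring (k : Type*) [Field k] : Type _ := MvPolynomial (Fin 3) k ⧸ Ideal.span {q2Rel k}

namespace Q2Lines
set_option linter.unusedSectionVars false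
set_option linter.unusedVariables false

section Top

variable {k : Type*} [Field k] {G : Type*} [AddCommMonoid G]
  {Γ : Type*} [AddCommGroup Γ] [LinearOrder Γ] [IsOrderedAddMonoid Γ]

/-- `g` is the `D`-largest exponent of `p`. -/
def IsTop (D : G →+ Γ) (p : AddMonoidAlgebra k G) (g : G) : Prop :=
  p.coeff g ≠ 0 ∧ ∀ g', p.coeff g' ≠ 0 → D g' ≤ D g

theorem exists_isTop (D : G →+ Γ) {p : AddMonoidAlgebra k G} (hp : p ≠ 0) :
    ∃ g, IsTop D p g := by
  have hne : p.coeff.support.Nonempty := by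
    rw [Finsupp.support_nonempty_iff]
    simpa using hp
  obtain ⟨g, hg, hmax⟩ := Finset.exists_max_image p.coeff.support D hne
  exact ⟨g, by simpa using hg, fun g' hg' => hmax g' (by simpa using hg')⟩

theorem IsTop.unique {D : G →+ Γ} (hD : Function.Injective D) {p : AddMonoidAlgebra k G} {g h : G}
    (hg : IsTop D p g) (hh : IsTop D p h) : g = h :=
  hD (le_antisymm (hh.2 g hg.1) (hg.2 h hh.1))

theorem IsTop.ne_zero {D : G →+ Γ} {p : AddMonoidAlgebra k G} {g : G}
    (hg : IsTop D p g) : p ≠ 0 := by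
  rintro rfl
  exact hg.1 (by simp)

theorem coeff_mul_ne_zero {p q : AddMonoidAlgebra k G} {x : G} (h : (p * q).coeff x ≠ 0) :
    ∃ a b, p.coeff a ≠ 0 ∧ q.coeff b ≠ 0 ∧ a + b = x := by
  classical
  by_contra hcon
  push Not at hcon
  apply h
  rw [AddMonoidAlgebra.coeff_mul]
  simp only [Finsupp.sum]
  apply Finset.sum_eq_zero
  intro a ha
  apply Finset.sum_eq_zero
  intro b hb
  rw [if_neg]
  exact hcon a b (by simpa using ha) (by simpa using hb)

theorem IsTop.mul {D : G →+ Γ} (hD : Function.Injective D) {p q : AddMonoidAlgebra k G} {g h : G}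
    (hg : IsTop D p g) (hh : IsTop D q h) : IsTop D (p * q) (g + h) := by
  constructor
  · rw [AddMonoidAlgebra.coeff_mul_add_of_uniqueAdd]
    · exact mul_ne_zero hg.1 hh.1
    · intro a b ha hb hab
      have h1 := hg.2 a (by simpa using ha)
      have h2 := hh.2 b (by simpa using hb)
      have h3 : D a + D b = D g + D h := by rw [← map_add, ← map_add, hab]
      constructor
      · apply hD
        by_contra hne
        have := lt_of_le_of_ne h1 hne
        exact absurd h3 (ne_of_lt (add_lt_add_of_lt_of_le this h2))
      · apply hD
        by_contra hne
        have := lt_of_le_of_ne h2 hne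
        exact absurd h3 (ne_of_lt (add_lt_add_of_le_of_lt h1 this))
  · intro x hx
    obtain ⟨a, b, ha, hb, rfl⟩ := coeff_mul_ne_zero hx
    rw [map_add, map_add]
    exact add_le_add (hg.2 a ha) (hh.2 b hb)

theorem isTop_single (D : G →+ Γ) (g : G) {c : k} (hc : c ≠ 0) :
    IsTop D (AddMonoidAlgebra.single g c) g := by
  classical
  constructor
  · simpa using hc
  · intro g' hg'
    rw [AddMonoidAlgebra.coeff_single, Finsupp.single_apply] at hg'
    split_ifs at hg' with h
    · rw [h]
    · exact absurd rfl hg'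

theorem isTop_one (D : G →+ Γ) : IsTop D (1 : AddMonoidAlgebra k G) 0 := by
  rw [AddMonoidAlgebra.one_def]
  exact isTop_single D 0 one_ne_zero

theorem IsTop.pow {D : G →+ Γ} (hD : Function.Injective D) {p : AddMonoidAlgebra k G} {g : G}
    (hg : IsTop D p g) (n : ℕ) : IsTop D (p ^ n) (n • g) := by
  induction n with
  | zero => simpa using isTop_one D
  | succ n ih => rw [pow_succ, succ_nsmul]; exact ih.mul hD hg

theorem isTop_add_left {D : G →+ Γ} (hD : Function.Injective D) {p q : AddMonoidAlgebra k G}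
    {g : G} (hg : IsTop D p g) (hq : ∀ g', q.coeff g' ≠ 0 → D g' < D g) :
    IsTop D (p + q) g := by
  constructor
  · have : q.coeff g = 0 := by
      by_contra h
      exact lt_irrefl _ (hq g h)
    rw [AddMonoidAlgebra.coeff_add, Finsupp.add_apply, this, add_zero]
    exact hg.1
  · intro g' hg'
    by_cases h1 : p.coeff g' = 0
    · refine (hq g' fun h2 => hg' ?_).le
      rw [AddMonoidAlgebra.coeff_add, Finsupp.add_apply, h1, h2, add_zero]
    · exact hg.2 g' h1

theorem isTop_sum {D : G →+ Γ} (hD : Function.Injective D) {ι : Type*} {s : Finset ι}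
    (hs : s.Nonempty) {c : ι → k} (hc : ∀ b ∈ s, c b ≠ 0) {B : ι → AddMonoidAlgebra k G}
    {g : ι → G} (hB : ∀ b ∈ s, IsTop D (B b) (g b)) (hg : Set.InjOn g s) :
    ∃ b0 ∈ s, IsTop D (∑ b ∈ s, c b • B b) (g b0) ∧ ∀ b ∈ s, D (g b) ≤ D (g b0) := by
  obtain ⟨b0, hb0, hmax⟩ := Finset.exists_max_image s (fun b => D (g b)) hs
  refine ⟨b0, hb0, ⟨?_, ?_⟩, hmax⟩
  · have : (∑ b ∈ s, c b • B b).coeff (g b0) = ∑ b ∈ s, c b * (B b).coeff (g b0) := by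
      rw [AddMonoidAlgebra.coeff_sum, Finsupp.finsetSum_apply]
      rfl
    rw [this, Finset.sum_eq_single b0]
    · exact mul_ne_zero (hc b0 hb0) (hB b0 hb0).1
    · intro b hb hne
      suffices h : (B b).coeff (g b0) = 0 by rw [h, mul_zero]
      by_contra h
      have h1 := (hB b hb).2 _ h
      exact hne (hg hb hb0 (hD (le_antisymm (hmax b hb) h1)))
    · intro h; exact absurd hb0 h
  · intro g' hg'
    have : (∑ b ∈ s, c b • B b).coeff g' = ∑ b ∈ s, c b * (B b).coeff g' := by
      rw [AddMonoidAlgebra.coeff_sum, Finsupp.finsetSum_apply]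
      rfl
    rw [this] at hg'
    obtain ⟨b, hb, hne⟩ := Finset.exists_ne_zero_of_sum_ne_zero hg'
    exact ((hB b hb).2 g' (right_ne_zero_of_mul hne)).trans (hmax b hb)

end Top

section Span

variable {k : Type*} [Field k] {R : Type*} [CommRing R] [Algebra k R]

/-- Index set for the monomials `x^i z^j` (`false`) and `y^i z^j` with `i > 0` (`true`). -/
def mon (x y z : R) (b : Bool × ℕ × ℕ) : R := (if b.1 then y else x) ^ b.2.1 * z ^ b.2.2

theorem span_mon_eq_top (x y z : R) (w : Polynomial k) (hw : x * y = Polynomial.aeval z w)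
    (htop : Algebra.adjoin k {x, y, z} = ⊤) :
    Submodule.span k (Set.range (mon x y z)) = ⊤ := by
  set S := Submodule.span k (Set.range (mon x y z)) with hS
  have hmem : ∀ b, mon x y z b ∈ S := fun b => Submodule.subset_span ⟨b, rfl⟩
  have hz : ∀ a ∈ S, a * z ∈ S := by
    intro a ha
    induction ha using Submodule.span_induction with
    | mem a ha =>
      obtain ⟨⟨b, i, j⟩, rfl⟩ := ha
      have : mon x y z (b, i, j) * z = mon x y z (b, i, j + 1) := by
        simp only [mon, pow_succ]; ring
      rw [this]; exact hmem _
    | zero => simp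
    | add a b _ _ ha hb => rw [add_mul]; exact S.add_mem ha hb
    | smul c a _ ha => rw [smul_mul_assoc]; exact S.smul_mem _ ha
  have hzp : ∀ (q : Polynomial k) (a : R), a ∈ S → a * Polynomial.aeval z q ∈ S := by
    intro q a ha
    induction q using Polynomial.induction_on' with
    | add p q hp hq => rw [map_add, mul_add]; exact S.add_mem hp hq
    | monomial n c =>
      rw [Polynomial.aeval_monomial]
      have : ∀ n, a * z ^ n ∈ S := by
        intro n
        induction n with
        | zero => simpa using ha
        | succ n ih => rw [pow_succ, ← mul_assoc]; exact hz _ ih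
      have h2 : a * ((algebraMap k R) c * z ^ n) = c • (a * z ^ n) := by
        rw [Algebra.smul_def]; ring
      rw [h2]
      exact S.smul_mem _ (this n)
  have hx : ∀ a ∈ S, a * x ∈ S := by
    intro a ha
    induction ha using Submodule.span_induction with
    | mem a ha =>
      obtain ⟨⟨b, i, j⟩, rfl⟩ := ha
      cases b with
      | false =>
        have : mon x y z (false, i, j) * x = mon x y z (false, i + 1, j) := by
          simp only [mon, pow_succ]; simp; ring
        rw [this]; exact hmem _
      | true =>
        cases i with
        | zero =>
          have : mon x y z (true, 0, j) * x = mon x y z (false, 1, j) := by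
            simp [mon]; ring
          rw [this]; exact hmem _
        | succ i =>
          have : mon x y z (true, i + 1, j) * x = mon x y z (true, i, j) * Polynomial.aeval z w := by
            rw [← hw]; simp [mon]; ring
          rw [this]; exact hzp _ _ (hmem _)
    | zero => simp
    | add a b _ _ ha hb => rw [add_mul]; exact S.add_mem ha hb
    | smul c a _ ha => rw [smul_mul_assoc]; exact S.smul_mem _ ha
  have hy : ∀ a ∈ S, a * y ∈ S := by
    intro a ha
    induction ha using Submodule.span_induction with
    | mem a ha =>
      obtain ⟨⟨b, i, j⟩, rfl⟩ := ha
      cases b with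
      | true =>
        have : mon x y z (true, i, j) * y = mon x y z (true, i + 1, j) := by
          simp only [mon, pow_succ]; simp; ring
        rw [this]; exact hmem _
      | false =>
        cases i with
        | zero =>
          have : mon x y z (false, 0, j) * y = mon x y z (true, 1, j) := by
            simp [mon]; ring
          rw [this]; exact hmem _
        | succ i =>
          have : mon x y z (false, i + 1, j) * y = mon x y z (false, i, j) * Polynomial.aeval z w := by
            rw [← hw]; simp [mon]; ring
          rw [this]; exact hzp _ _ (hmem _)
    | zero => simp
    | add a b _ _ ha hb => rw [add_mul]; exact S.add_mem ha hb
    | smul c a _ ha => rw [smul_mul_assoc]; exact S.smul_mem _ ha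
  have hone : (1 : R) ∈ S := by
    have : mon x y z (false, 0, 0) = 1 := by simp [mon]
    rw [← this]; exact hmem _
  have key : ∀ a : R, ∀ s ∈ S, s * a ∈ S := by
    intro a
    have ha : a ∈ Algebra.adjoin k {x, y, z} := by rw [htop]; trivial
    induction ha using Algebra.adjoin_induction with
    | mem a ha =>
      rcases ha with rfl | rfl | rfl
      · exact hx
      · exact hy
      · exact hz
    | algebraMap c => intro s hs; rw [mul_comm, ← Algebra.smul_def]; exact S.smul_mem _ hs
    | add a b _ _ ha hb => intro s hs; rw [mul_add]; exact S.add_mem (ha s hs) (hb s hs)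
    | mul a b _ _ ha hb => intro s hs; rw [← mul_assoc]; exact hb _ (ha s hs)
  rw [eq_top_iff]
  intro a _
  simpa using key a 1 hone

/-- normalised expansions: avoid the double counting `x^0 z^j = y^0 z^j`. -/
def NF (b : Bool × ℕ × ℕ) : Prop := b.1 = true → 0 < b.2.1

theorem exists_expansion (x y z : R) (w : Polynomial k) (hw : x * y = Polynomial.aeval z w)
    (htop : Algebra.adjoin k {x, y, z} = ⊤) (a : R) :
    ∃ (s : Finset (Bool × ℕ × ℕ)) (c : Bool × ℕ × ℕ → k), (∀ b ∈ s, NF b) ∧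
      (∀ b ∈ s, c b ≠ 0) ∧ a = ∑ b ∈ s, c b • mon x y z b := by
  classical
  have h : Submodule.span k (mon x y z '' {b | NF b}) = ⊤ := by
    rw [eq_top_iff, ← span_mon_eq_top x y z w hw htop]
    apply Submodule.span_mono
    rintro _ ⟨⟨b, i, j⟩, rfl⟩
    cases b with
    | false => exact ⟨(false, i, j), by simp [NF], rfl⟩
    | true =>
      cases i with
      | zero => exact ⟨(false, 0, j), by simp [NF], by simp [mon]⟩
      | succ i => exact ⟨(true, i + 1, j), by simp [NF], rfl⟩
  have ha : a ∈ Submodule.span k (mon x y z '' {b | NF b}) := by rw [h]; trivial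
  rw [Finsupp.mem_span_image_iff_linearCombination] at ha
  obtain ⟨l, hl, rfl⟩ := ha
  refine ⟨l.support, l, fun b hb => ?_, fun b hb => by simpa using hb, ?_⟩
  · exact (Finsupp.mem_supported _ _).1 hl hb
  · rw [Finsupp.linearCombination_apply, Finsupp.sum]

end Span

end Q2Lines

namespace Q2Lines
set_option linter.unusedSectionVars false
set_option linter.unusedVariables false

section Homs

variable {k : Type*} [Field k]

variable (k) in
def xA : Q2Ring k := Ideal.Quotient.mk _ (X 0)
variable (k) in
def yA : Q2Ring k := Ideal.Quotient.mk _ (X 1)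
variable (k) in
def zA : Q2Ring k := Ideal.Quotient.mk _ (X 2)

theorem relA : xA k * yA k = zA k * (zA k + 1) := by
  have h1 : (Ideal.Quotient.mk (Ideal.span {q2Rel k})) (X 0 * X 1 - X 2 * (X 2 + 1)) = 0 :=
    Ideal.Quotient.eq_zero_iff_mem.2 (Ideal.subset_span rfl)
  rw [map_sub, sub_eq_zero] at h1
  simpa [xA, yA, zA] using h1

def liftA {R : Type*} [CommRing R] [Algebra k R] (x y z : R) (h : x * y = z * (z + 1)) :
    Q2Ring k →ₐ[k] R :=
  Ideal.Quotient.liftₐ _ (aeval ![x, y, z]) (by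
    intro a ha
    have : Ideal.span {q2Rel k} ≤ RingHom.ker (aeval ![x, y, z] : MvPolynomial (Fin 3) k →ₐ[k] R) := by
      rw [Ideal.span_le]
      rintro _ rfl
      simp [q2Rel, RingHom.mem_ker, h]
    exact this ha)

section
variable {R : Type*} [CommRing R] [Algebra k R] (x y z : R) (h : x * y = z * (z + 1))
@[simp] theorem liftA_x : liftA (k := k) x y z h (xA k) = x := by
  simp only [liftA, xA]
  erw [Ideal.Quotient.liftₐ_apply, Ideal.Quotient.lift_mk]
  simp
@[simp] theorem liftA_y : liftA (k := k) x y z h (yA k) = y := by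
  simp only [liftA, yA]
  erw [Ideal.Quotient.liftₐ_apply, Ideal.Quotient.lift_mk]
  simp
@[simp] theorem liftA_z : liftA (k := k) x y z h (zA k) = z := by
  simp only [liftA, zA]
  erw [Ideal.Quotient.liftₐ_apply, Ideal.Quotient.lift_mk]
  simp
end

theorem homA_ext {R : Type*} [CommRing R] [Algebra k R] {φ ψ : Q2Ring k →ₐ[k] R}
    (hx : φ (xA k) = ψ (xA k)) (hy : φ (yA k) = ψ (yA k)) (hz : φ (zA k) = ψ (zA k)) : φ = ψ := by
  apply Ideal.Quotient.algHom_ext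
  apply MvPolynomial.algHom_ext
  intro i
  fin_cases i
  · exact hx
  · exact hy
  · exact hz

theorem adjoinA : Algebra.adjoin k {xA k, yA k, zA k} = ⊤ := by
  have h := MvPolynomial.adjoin_range_X (R := k) (σ := Fin 3)
  have h2 := congrArg (Subalgebra.map (Ideal.Quotient.mkₐ k (Ideal.span {q2Rel k}))) h
  rw [AlgHom.map_adjoin, Algebra.map_top,
    (AlgHom.range_eq_top _).2 (Ideal.Quotient.mkₐ_surjective k _)] at h2
  rw [← h2]
  congr 1
  ext a
  simp only [Set.mem_insert_iff, Set.mem_singleton_iff, Set.mem_image, Set.mem_range,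
    exists_exists_eq_and, Ideal.Quotient.mkₐ_eq_mk]
  constructor
  · rintro (rfl | rfl | rfl)
    exacts [⟨0, rfl⟩, ⟨1, rfl⟩, ⟨2, rfl⟩]
  · rintro ⟨i, rfl⟩
    fin_cases i
    · left; rfl
    · right; left; rfl
    · right; right; rfl

theorem expandA (a : Q2Ring k) :
    ∃ (s : Finset (Bool × ℕ × ℕ)) (c : Bool × ℕ × ℕ → k), (∀ b ∈ s, NF b) ∧
      (∀ b ∈ s, c b ≠ 0) ∧ a = ∑ b ∈ s, c b • mon (xA k) (yA k) (zA k) b :=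
  exists_expansion _ _ _ (Polynomial.X * (Polynomial.X + 1)) (by simp [relA]) adjoinA a

/-- the plane -/
abbrev PP (k : Type*) [Field k] := MvPolynomial (Fin 2) k
abbrev LL (k : Type*) [Field k] := AddMonoidAlgebra k (ℤ × ℤ)

variable (k) in
abbrev pX : PP k := X 0
variable (k) in
abbrev pT : PP k := X 1
variable (k) in
def pV : PP k := 1 + X 0 * X 1

theorem adjoinP : Algebra.adjoin k {pX k, pT k, pV k} = ⊤ := by
  rw [eq_top_iff, ← MvPolynomial.adjoin_range_X (R := k) (σ := Fin 2)]
  apply Algebra.adjoin_mono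
  rintro _ ⟨i, rfl⟩
  fin_cases i
  · left; rfl
  · right; left; rfl

theorem expandP (a : PP k) :
    ∃ (s : Finset (Bool × ℕ × ℕ)) (c : Bool × ℕ × ℕ → k), (∀ b ∈ s, NF b) ∧
      (∀ b ∈ s, c b ≠ 0) ∧ a = ∑ b ∈ s, c b • mon (pX k) (pT k) (pV k) b :=
  exists_expansion _ _ _ (Polynomial.X - 1) (by simp [pV]) adjoinP a

variable (k) in
def jj : Q2Ring k →ₐ[k] PP k := liftA (pX k) (pT k + pX k * pT k ^ 2) (pX k * pT k) (by ring)

@[simp] theorem jj_x : jj k (xA k) = pX k := by simp [jj]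
@[simp] theorem jj_y : jj k (yA k) = pT k + pX k * pT k ^ 2 := by simp [jj]
@[simp] theorem jj_z : jj k (zA k) = pX k * pT k := by simp [jj]

variable (k) in
def sg (y t : ℤ) : LL k := AddMonoidAlgebra.single (y, t) 1

theorem sg_mul (a b c d : ℤ) : sg k a b * sg k c d = sg k (a + c) (b + d) := by
  simp [sg, AddMonoidAlgebra.single_mul_single]

theorem sg_zero : sg k 0 0 = 1 := rfl

variable (k) in
def io : PP k →ₐ[k] LL k := aeval ![sg k 1 (-2) - sg k 0 (-1), sg k 0 1]

theorem io_X : io k (X 0) = sg k 1 (-2) - sg k 0 (-1) := by simp [io]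
theorem io_T : io k (X 1) = sg k 0 1 := by simp [io]
theorem io_XT : io k (X 0 * X 1) = sg k 1 (-1) - 1 := by
  rw [map_mul, io_X, io_T, sub_mul, sg_mul, sg_mul]; simp [← sg_zero]
theorem io_V : io k (pV k) = sg k 1 (-1) := by
  rw [pV, map_add, io_XT]; simp
theorem io_jz : io k (jj k (zA k)) = sg k 1 (-1) - 1 := by rw [jj_z, io_XT]
theorem io_jy : io k (jj k (yA k)) = sg k 1 0 := by
  have : pT k + pX k * pT k ^ 2 = pV k * X 1 := by rw [pV]; ring
  rw [jj_y, this, map_mul, io_V, io_T, sg_mul]; simp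
theorem io_jx : io k (jj k (xA k)) = sg k 1 (-2) - sg k 0 (-1) := by rw [jj_x, io_X]

def ee (x : Polynomial k) : PP k →ₐ[k] Polynomial k := aeval ![x, Polynomial.X]
@[simp] theorem ee_X (x : Polynomial k) : ee x (X 0) = x := by simp [ee]
@[simp] theorem ee_T (x : Polynomial k) : ee x (X 1) = Polynomial.X := by simp [ee]

section D
variable {Γ : Type*} [AddCommGroup Γ] [LinearOrder Γ] [IsOrderedAddMonoid Γ]
  {D : ℤ × ℤ →+ Γ} (hD : Function.Injective D)

theorem isTop_sg (D : ℤ × ℤ →+ Γ) (y t : ℤ) : IsTop D (sg k y t) (y, t) :=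
  isTop_single _ _ one_ne_zero

include hD in
theorem isTop_sg_sub (a b c d : ℤ) (h : D (c, d) < D (a, b)) :
    IsTop D (sg k a b - sg k c d) (a, b) := by
  rw [sub_eq_add_neg]
  apply isTop_add_left hD (isTop_sg D a b)
  intro g' hg'
  have h2 : (sg k c d).coeff g' ≠ 0 := by
    intro h0; apply hg'; simp [h0]
  have := (isTop_sg D c d).2 g' h2
  exact this.trans_lt h

include hD in
theorem isTop_sg_sub' (a b c d : ℤ) (h : D (a, b) < D (c, d)) :
    IsTop D (sg k a b - sg k c d) (c, d) := by
  have := isTop_sg_sub (k := k) hD c d a b h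
  have e : sg k a b - sg k c d = - (sg k c d - sg k a b) := by ring
  have e2 : ∀ g, (sg k a b - sg k c d).coeff g = - (sg k c d - sg k a b).coeff g := by
    intro g; rw [e]; rfl
  constructor
  · rw [e2]; exact neg_ne_zero.2 this.1
  · intro g' hg'
    rw [e2] at hg'
    exact this.2 _ (neg_ne_zero.1 hg')

variable (hpos : 0 < D (1, -1))

include hD hpos
theorem top_X : IsTop D (io k (X 0)) (1, -2) := by
  rw [io_X]
  apply isTop_sg_sub hD
  have : ((1, -2) : ℤ × ℤ) = (1, -1) + (0, -1) := by simp
  rw [this, map_add]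
  exact lt_add_of_pos_left _ hpos

omit hD hpos in
theorem top_T : IsTop D (io k (X 1)) (0, 1) := by rw [io_T]; exact isTop_sg _ _ _

theorem top_jz : IsTop D (io k (jj k (zA k))) (1, -1) := by
  rw [io_jz, ← sg_zero]
  apply isTop_sg_sub hD
  have : ((0, 0) : ℤ × ℤ) = 0 := rfl
  rw [this, map_zero]; exact hpos

theorem top_jx : IsTop D (io k (jj k (xA k))) (1, -2) := by
  rw [jj_x]; exact top_X hD hpos

omit hD hpos in
theorem top_jy : IsTop D (io k (jj k (yA k))) (1, 0) := by
  rw [io_jy]; exact isTop_sg _ _ _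

/-- exponent in `L` of the leading term of `X^u T^v` -/
def expo (m : Fin 2 →₀ ℕ) : ℤ × ℤ := (m 0, m 1 - 2 * m 0)

theorem top_monomial (m : Fin 2 →₀ ℕ) : IsTop D (io k (monomial m 1)) (expo m) := by
  have : (monomial m (1 : k)) = X 0 ^ (m 0) * X 1 ^ (m 1) := by
    rw [monomial_eq, map_one, one_mul, Finsupp.prod_fintype _ _ (by simp)]
    simp
  rw [this, map_mul, map_pow, map_pow]
  have h := ((top_X (k := k) hD hpos).pow hD (m 0)).mul hD ((top_T (k := k) (D := D)).pow hD (m 1))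
  convert h using 1
  simp [expo]; ring

omit hD hpos in
theorem expo_inj : Function.Injective expo := by
  intro m m' h
  simp only [expo, Prod.mk.injEq] at h
  ext i
  fin_cases i
  · have := h.1; simp; omega
  · have := h.2; have := h.1; simp; omega

theorem top_io {q : PP k} (hq : q ≠ 0) : ∃ m ∈ q.support, IsTop D (io k q) (expo m) ∧
    ∀ m' ∈ q.support, D (expo m') ≤ D (expo m) := by
  have hs : q.support.Nonempty := by rwa [MvPolynomial.support_nonempty]
  have h := isTop_sum hD hs (c := fun m => q.coeff m) (fun m hm => by simpa using hm)
    (B := fun m => io k (monomial m 1)) (fun m _ => top_monomial hD hpos m)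
    (expo_inj.injOn)
  have e : ∑ m ∈ q.support, q.coeff m • io k (monomial m 1) = io k q := by
    conv_rhs => rw [q.as_sum]
    rw [map_sum]
    apply Finset.sum_congr rfl
    intro m _
    rw [← map_smul, smul_monomial, smul_eq_mul, mul_one]
  rwa [e] at h

end D

/-- lexicographic order homomorphism -/
def lexD {G : Type*} [AddCommMonoid G] {Γ Γ' : Type*} [AddCommGroup Γ] [AddCommGroup Γ']
    (a : G →+ Γ) (b : G →+ Γ') : G →+ Γ ×ₗ Γ' where
  toFun g := toLex (a g, b g)
  map_zero' := by rw [map_zero, map_zero]; rfl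
  map_add' x y := by rw [map_add, map_add]; rfl

theorem lexD_inj {G : Type*} [AddCommMonoid G] {Γ Γ' : Type*} [AddCommGroup Γ] [AddCommGroup Γ']
    (a : G →+ Γ) (b : G →+ Γ') (h : ∀ x y, a x = a y → b x = b y → x = y) :
    Function.Injective (lexD a b) := by
  intro x y hxy
  have : (a x, b x) = (a y, b y) := toLex.injective hxy
  exact h x y (congrArg Prod.fst this) (congrArg Prod.snd this)

theorem lexD_le {G : Type*} [AddCommMonoid G] {Γ Γ' : Type*} [AddCommGroup Γ] [AddCommGroup Γ']
    [LinearOrder Γ] [LinearOrder Γ']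
    (a : G →+ Γ) (b : G →+ Γ') (x y : G) :
    lexD a b x ≤ lexD a b y ↔ a x < a y ∨ a x = a y ∧ b x ≤ b y := Prod.Lex.le_iff

theorem lexD_lt {G : Type*} [AddCommMonoid G] {Γ Γ' : Type*} [AddCommGroup Γ] [AddCommGroup Γ']
    [LinearOrder Γ] [LinearOrder Γ']
    (a : G →+ Γ) (b : G →+ Γ') (x y : G) :
    lexD a b x < lexD a b y ↔ a x < a y ∨ a x = a y ∧ b x < b y := Prod.Lex.lt_iff

/-- linear functional -/
def lin (p q : ℤ) : ℤ × ℤ →+ ℤ where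
  toFun g := p * g.1 + q * g.2
  map_zero' := by simp
  map_add' x y := by simp; ring

@[simp] theorem lin_apply (p q : ℤ) (g : ℤ × ℤ) : lin p q g = p * g.1 + q * g.2 := rfl


theorem io_inj : Function.Injective (io k) := by
  rw [injective_iff_map_eq_zero]
  intro q h
  by_contra hq
  have hD : Function.Injective (lexD (lin 1 0) (lin 0 1)) :=
    lexD_inj _ _ (fun x y h1 h2 => by simp at h1 h2; exact Prod.ext h1 h2)
  have hpos : 0 < lexD (lin 1 0) (lin 0 1) (1, -1) := by
    rw [← map_zero (lexD (lin 1 0) (lin 0 1)), lexD_lt]; simp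
  obtain ⟨m, _, hm, _⟩ := top_io (k := k) hD hpos hq
  exact hm.ne_zero h

end Homs
end Q2Lines

namespace Q2Lines
set_option linter.unusedSectionVars false
set_option linter.unusedVariables false
section Newton

variable {k : Type*} [Field k]

/-- leading exponent of the monomial `X^i Z^j` or `Y^i Z^j` -/
def tb (b : Bool × ℕ × ℕ) : ℤ × ℤ :=
  b.2.1 • (if b.1 then ((1, 0) : ℤ × ℤ) else (1, -2)) + b.2.2 • ((1, -1) : ℤ × ℤ)

theorem tb_injOn {b b' : Bool × ℕ × ℕ} (hb : NF b) (hb' : NF b') (h : tb b = tb b') : b = b' := by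
  obtain ⟨b, i, j⟩ := b
  obtain ⟨b', i', j'⟩ := b'
  cases b <;> cases b' <;> simp [tb, NF] at h hb hb' ⊢ <;> omega

theorem jj_inj : Function.Injective (jj k) := by
  rw [injective_iff_map_eq_zero]
  intro a h
  by_contra ha
  have hD : Function.Injective (lexD (lin 1 0) (lin 0 1)) :=
    lexD_inj _ _ (fun x y h1 h2 => by simp at h1 h2; exact Prod.ext h1 h2)
  have hpos : 0 < lexD (lin 1 0) (lin 0 1) (1, -1) := by
    rw [← map_zero (lexD (lin 1 0) (lin 0 1)), lexD_lt]; simp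
  obtain ⟨s, c, hs, hc, e⟩ := expandA a
  have hne : s.Nonempty := by
    rw [Finset.nonempty_iff_ne_empty]
    rintro rfl
    exact ha (by simpa using e)
  have := isTop_sum hD hne hc (B := fun b => io k (jj k (mon (xA k) (yA k) (zA k) b)))
    (g := tb) (fun b _ => by
      obtain ⟨b, i, j⟩ := b
      simp only [mon, map_mul, map_pow]
      refine IsTop.mul hD (IsTop.pow hD ?_ _) ((top_jz hD hpos).pow hD _)
      cases b
      · simpa using top_jx hD hpos
      · simpa using top_jy)
    (fun b hb b' hb' h => tb_injOn (hs b hb) (hs b' hb') h)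
  obtain ⟨b0, _, ht, _⟩ := this
  apply ht.ne_zero
  have e2 := congrArg (fun a => io k (jj k a)) e
  simp only [map_sum, map_smul] at e2
  rw [← e2, h, map_zero]

abbrev LS (k : Type*) [Field k] := AddMonoidAlgebra k ((ℤ × ℤ) × ℕ)

variable (k) in
def incl : LL k →ₐ[k] LS k :=
  AddMonoidAlgebra.mapDomainAlgHom k k (AddMonoidHom.inl (ℤ × ℤ) ℕ)

variable (k) in
def ev0 : LS k →ₐ[k] LL k :=
  AddMonoidAlgebra.lift k (LL k) ((ℤ × ℤ) × ℕ)
    { toFun := fun g => if g.toAdd.2 = 0 then AddMonoidAlgebra.single g.toAdd.1 1 else 0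
      map_one' := by simp [AddMonoidAlgebra.one_def]
      map_mul' := by
        intro a b
        by_cases ha : a.toAdd.2 = 0 <;> by_cases hb : b.toAdd.2 = 0 <;>
          simp [ha, hb, AddMonoidAlgebra.single_mul_single] }

theorem ev0_single (g : ℤ × ℤ) (i : ℕ) (c : k) :
    ev0 k (AddMonoidAlgebra.single (g, i) c) = if i = 0 then AddMonoidAlgebra.single g c else 0 := by
  rw [ev0, AddMonoidAlgebra.lift_single]
  by_cases h : i = 0 <;> simp [h]

theorem incl_single (g : ℤ × ℤ) (c : k) :
    incl k (AddMonoidAlgebra.single g c) = AddMonoidAlgebra.single (g, 0) c := by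
  simp [incl]

theorem ev0_coeff (p : LS k) (g : ℤ × ℤ) : (ev0 k p).coeff g = p.coeff (g, 0) := by
  classical
  rw [← AddMonoidAlgebra.sum_coeff_single p]
  simp only [Finsupp.sum, map_sum, AddMonoidAlgebra.coeff_sum, Finsupp.finsetSum_apply]
  apply Finset.sum_congr rfl
  rintro ⟨h, i⟩ _
  rw [ev0_single]
  by_cases hi : i = 0
  · simp [hi, AddMonoidAlgebra.coeff_single, Finsupp.single_apply]
  · simp [hi, AddMonoidAlgebra.coeff_single, Finsupp.single_apply]

theorem incl_coeff (p : LL k) (g : ℤ × ℤ) (i : ℕ) :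
    (incl k p).coeff (g, i) = if i = 0 then p.coeff g else 0 := by
  classical
  rw [← AddMonoidAlgebra.sum_coeff_single p]
  simp only [Finsupp.sum, map_sum, AddMonoidAlgebra.coeff_sum, Finsupp.finsetSum_apply]
  by_cases hi : i = 0
  · rw [if_pos hi]
    apply Finset.sum_congr rfl
    rintro h _
    rw [incl_single]
    simp [hi, AddMonoidAlgebra.coeff_single, Finsupp.single_apply]
  · rw [if_neg hi]
    apply Finset.sum_eq_zero
    rintro h _
    rw [incl_single]
    simp [hi, Ne.symm hi, AddMonoidAlgebra.coeff_single, Finsupp.single_apply]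

theorem ev0_incl (p : LL k) : ev0 k (incl k p) = p := by
  ext g
  rw [ev0_coeff, incl_coeff, if_pos rfl]

theorem incl_ev0 (p : LS k) (h : ∀ g i, p.coeff (g, i) ≠ 0 → i = 0) : incl k (ev0 k p) = p := by
  ext ⟨g, i⟩
  rw [incl_coeff]
  split_ifs with hi
  · rw [ev0_coeff, hi]
  · by_contra hne
    exact hi (h g i (Ne.symm hne))

variable (k) in
def sig : LS k := AddMonoidAlgebra.single ((0, 0), 1) 1

theorem ev0_sig : ev0 k (sig k) = 0 := by rw [sig, ev0_single]; simp

theorem sig_ne : sig k ≠ 0 := by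
  intro h
  have : (sig k).coeff ((0, 0), 1) = 0 := by rw [h]; rfl
  simp [sig] at this

variable (α : Q2Ring k ≃ₐ[k] Q2Ring k)

def JA : Q2Ring k →ₐ[k] LS k := (incl k).comp ((io k).comp ((jj k).comp α.toAlgHom))

def Theta : Q2Ring k →ₐ[k] LS k :=
  liftA (JA α (xA k)) (JA α (yA k) + sig k * (2 * JA α (zA k) + 1) + sig k ^ 2 * JA α (xA k))
    (JA α (zA k) + sig k * JA α (xA k)) (by
      have h := congrArg (JA α) (relA (k := k))
      simp only [map_mul, map_add, map_one] at h
      linear_combination h)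

def Phi : Q2Ring k →ₐ[k] LS k := (Theta α).comp α.symm.toAlgHom

theorem JA_apply (a : Q2Ring k) : JA α a = incl k (io k (jj k (α a))) := rfl

theorem Phi_α (a : Q2Ring k) : Phi α (α a) = Theta α a := by
  simp [Phi]

theorem ev0_Phi (a : Q2Ring k) : ev0 k (Phi α a) = io k (jj k a) := by
  have h : (ev0 k).comp (Theta α) = (io k).comp ((jj k).comp α.toAlgHom) := by
    apply homA_ext <;> simp [Theta, JA_apply, ev0_incl, ev0_sig]
  have := DFunLike.congr_fun h (α.symm a)
  simpa [Phi] using this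

theorem Phi_coeff (a : Q2Ring k) (g : ℤ × ℤ) :
    (Phi α a).coeff (g, 0) = (io k (jj k a)).coeff g := by
  rw [← ev0_Phi α, ev0_coeff]

theorem xA_ne : xA k ≠ 0 := by
  intro h
  have := congrArg (jj k) h
  simp at this

theorem JA_x_ne : JA α (xA k) ≠ 0 := by
  intro h
  have := congrArg (ev0 k) h
  rw [JA_apply, ev0_incl, map_zero] at this
  have h2 := io_inj (this.trans (map_zero _).symm)
  have h3 := jj_inj (h2.trans (map_zero _).symm)
  simp at h3
  exact xA_ne h3

theorem Phi_nontrivial : ∃ a ∈ ({xA k, yA k, zA k} : Set (Q2Ring k)), ∃ g i,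
    (Phi α a).coeff (g, i) ≠ 0 ∧ i ≠ 0 := by
  by_contra hcon
  push Not at hcon
  have h : (incl k).comp ((ev0 k).comp (Phi α)) = Phi α := by
    apply homA_ext <;> apply incl_ev0
    · exact hcon _ (by simp)
    · exact hcon _ (by simp)
    · exact hcon _ (by simp)
  have h2 := DFunLike.congr_fun h (α (zA k))
  simp only [AlgHom.comp_apply, ev0_Phi] at h2
  rw [← JA_apply, Phi_α, Theta, liftA_z] at h2
  have h3 : sig k * JA α (xA k) = 0 := by linear_combination -h2
  rcases mul_eq_zero.1 h3 with h4 | h4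
  · exact sig_ne h4
  · exact JA_x_ne α h4

end Newton
end Q2Lines

namespace Q2Lines
set_option linter.unusedSectionVars false
set_option linter.unusedVariables false
section Vertex

variable {k : Type*} [Field k]

variable (k) in
def gen : Fin 3 → Q2Ring k := ![xA k, yA k, zA k]
def tt : Fin 3 → ℤ × ℤ := ![(1, -2), (1, 0), (1, -1)]

variable {Γ : Type*} [AddCommGroup Γ] [LinearOrder Γ] [IsOrderedAddMonoid Γ]
  {D : ℤ × ℤ →+ Γ} (hD : Function.Injective D) (hpos : 0 < D (1, -1))

include hD hpos in
theorem top_gen (a : Fin 3) : IsTop D (io k (jj k (gen k a))) (tt a) := by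
  fin_cases a
  · exact top_jx hD hpos
  · exact top_jy
  · exact top_jz hD hpos

/-- the first component of the auxiliary grading -/
def VA (D : ℤ × ℤ →+ Γ) (N : ℕ) (κ : Γ) : (ℤ × ℤ) × ℕ →+ Γ where
  toFun e := N • D e.1 - e.2 • κ
  map_zero' := by simp
  map_add' x y := by
    simp only [Prod.fst_add, Prod.snd_add, map_add, nsmul_add, add_nsmul]; abel

def VB : (ℤ × ℤ) × ℕ →+ ℤ where
  toFun e := e.2
  map_zero' := by simp
  map_add' x y := by simp

theorem nsmul_inj_of {N : ℕ} (hN : N ≠ 0) {a b : Γ} (h : N • a = N • b) : a = b :=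
  nsmul_right_injective hN h

include hD in
theorem V_inj {N : ℕ} (hN : N ≠ 0) (κ : Γ) : Function.Injective (lexD (VA D N κ) VB) := by
  apply lexD_inj
  rintro ⟨g, i⟩ ⟨g', i'⟩ h1 h2
  have h2' : (i : ℤ) = i' := h2
  have hi : i = i' := by exact_mod_cast h2'
  subst hi
  have h3 : N • D g - i • κ = N • D g' - i • κ := h1
  have := hD (nsmul_inj_of hN (sub_left_inj.1 h3))
  rw [this]

variable (α : Q2Ring k ≃ₐ[k] Q2Ring k)

include hD hpos in
theorem exists_grading : ∃ (N : ℕ) (κ : Γ), N ≠ 0 ∧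
    (∀ a g i, (Phi α (gen k a)).coeff (g, i) ≠ 0 → VA D N κ (g, i) ≤ N • D (tt a)) ∧
    ∃ a g i, i ≠ 0 ∧ (Phi α (gen k a)).coeff (g, i) ≠ 0 ∧ VA D N κ (g, i) = N • D (tt a) := by
  classical
  let S : Finset (Σ _ : Fin 3, (ℤ × ℤ) × ℕ) :=
    Finset.univ.sigma fun a => (Phi α (gen k a)).coeff.support.filter (fun e => e.2 ≠ 0)
  have hS : ∀ a g i, (⟨a, (g, i)⟩ : Σ _ : Fin 3, (ℤ × ℤ) × ℕ) ∈ S ↔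
      (Phi α (gen k a)).coeff (g, i) ≠ 0 ∧ i ≠ 0 := by
    intro a g i; simp [S]
  have hne : S.Nonempty := by
    obtain ⟨a, ha, g, i, h1, h2⟩ := Phi_nontrivial α
    rcases ha with rfl | rfl | rfl
    · exact ⟨⟨0, (g, i)⟩, (hS _ _ _).2 ⟨h1, h2⟩⟩
    · exact ⟨⟨1, (g, i)⟩, (hS _ _ _).2 ⟨h1, h2⟩⟩
    · exact ⟨⟨2, (g, i)⟩, (hS _ _ _).2 ⟨h1, h2⟩⟩
  let M : ℕ := S.sup (fun e => e.2.2)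
  have hM : ∀ e ∈ S, e.2.2 ≤ M := fun e he => Finset.le_sup (f := fun e => e.2.2) he
  let N := M.factorial
  have hN : N ≠ 0 := Nat.factorial_ne_zero _
  obtain ⟨⟨a0, g0, i0⟩, h0, hmax⟩ := Finset.exists_max_image S
    (fun e => (N / e.2.2) • (D e.2.1 - D (tt e.1))) hne
  set κ := (N / i0) • (D g0 - D (tt a0)) with hκ
  have hdiv : ∀ a g i, (⟨a, (g, i)⟩ : Σ _ : Fin 3, (ℤ × ℤ) × ℕ) ∈ S →
      i • ((N / i) • (D g - D (tt a))) = N • D g - N • D (tt a) := by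
    intro a g i h
    rw [← mul_nsmul', Nat.mul_div_cancel', nsmul_sub]
    exact Nat.dvd_factorial (Nat.pos_of_ne_zero ((hS _ _ _).1 h).2) (hM _ h)
  refine ⟨N, κ, hN, ?_, a0, g0, i0, ((hS _ _ _).1 h0).2, ((hS _ _ _).1 h0).1, ?_⟩
  · intro a g i h
    change N • D g - i • κ ≤ _
    by_cases hi : i = 0
    · subst hi
      rw [Phi_coeff] at h
      have := (top_gen hD hpos a).2 g h
      rw [zero_nsmul, sub_zero]
      exact nsmul_le_nsmul_right this N
    · have hmem := (hS a g i).2 ⟨h, hi⟩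
      have h1 : (N / i) • (D g - D (tt a)) ≤ κ := hmax _ hmem
      have h2 := nsmul_le_nsmul_right h1 i
      rw [hdiv _ _ _ hmem] at h2
      exact sub_le_comm.1 h2
  · change N • D g0 - i0 • κ = _
    rw [hκ, hdiv _ _ _ h0]
    abel

include hD hpos in
theorem vertex : ∃ i : ℕ, IsTop D (io k (jj k (α (xA k)))) (i, -2 * i) ∨
    IsTop D (io k (jj k (α (xA k)))) (i, 0) := by
  obtain ⟨N, κ, hN, hle, a0, g0, i0, hi0, hc0, he0⟩ := exists_grading hD hpos α
  set W := lexD (VA D N κ) VB with hW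
  have hWi : Function.Injective W := V_inj hD hN κ
  have hWle : ∀ e e', W e ≤ W e' → VA D N κ e ≤ VA D N κ e' := by
    intro e e' h
    rw [hW, lexD_le] at h
    rcases h with h | h
    · exact h.le
    · exact h.1.le
  -- tops of the generators
  have htop : ∀ a, ∃ g n, IsTop W (Phi α (gen k a)) (g, n) ∧ VA D N κ (g, n) = N • D (tt a) := by
    intro a
    have hmem : (Phi α (gen k a)).coeff (tt a, 0) ≠ 0 := by
      rw [Phi_coeff]; exact (top_gen hD hpos a).1
    have hne : Phi α (gen k a) ≠ 0 := by
      intro h; rw [h] at hmem; exact hmem rfl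
    obtain ⟨⟨g, n⟩, h⟩ := exists_isTop W hne
    refine ⟨g, n, h, le_antisymm (hle a g n h.1) ?_⟩
    have := hWle _ _ (h.2 _ hmem)
    have e : VA D N κ (tt a, 0) = N • D (tt a) := by
      change N • D (tt a) - 0 • κ = _; rw [zero_nsmul, sub_zero]
    rwa [e] at this
  choose G n hT hA using htop
  have hn0 : n a0 ≠ 0 := by
    have h := (hT a0).2 _ hc0
    rw [hW, lexD_le, he0, hA a0] at h
    rcases h with h | h
    · exact absurd h (lt_irrefl _)
    · have h2 : (i0 : ℤ) ≤ n a0 := h.2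
      omega
  have hrel := congrArg (Phi α) (relA (k := k))
  simp only [map_mul, map_add, map_one] at hrel
  have hz1 : IsTop W (Phi α (zA k) + 1) (G 2, n 2) := by
    apply isTop_add_left hWi (hT 2)
    intro g' hg'
    refine lt_of_le_of_lt ((isTop_one W).2 g' hg') ?_
    rw [hW, lexD_lt, hA 2]
    left
    rw [map_zero]
    exact nsmul_pos hpos hN
  have hsum : (G 0, n 0) + (G 1, n 1) = (G 2, n 2) + (G 2, n 2) := by
    have h1 : IsTop W (Phi α (xA k) * Phi α (yA k)) _ := (hT 0).mul hWi (hT 1)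
    have h2 : IsTop W (Phi α (zA k) * (Phi α (zA k) + 1)) _ := (hT 2).mul hWi hz1
    rw [hrel] at h1
    exact h1.unique hWi h2
  have hn : n 0 + n 1 = n 2 + n 2 := congrArg Prod.snd hsum
  have hn2 : n 2 ≠ 0 := by
    fin_cases a0 <;> simp at hn0 <;> omega
  -- expansion
  obtain ⟨s, c, hs, hc, e⟩ := expandA (α (xA k))
  have hne : s.Nonempty := by
    rw [Finset.nonempty_iff_ne_empty]
    rintro rfl
    simp at e
    exact xA_ne e
  let F : Bool × ℕ × ℕ → (ℤ × ℤ) × ℕ := fun b =>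
    b.2.1 • (if b.1 then (G 1, n 1) else (G 0, n 0)) + b.2.2 • (G 2, n 2)
  have hFA : ∀ b, VA D N κ (F b) = N • D (tb b) := by
    rintro ⟨b, i, j⟩
    cases b
    · simp only [F, tb, map_add, map_nsmul, if_neg (show ¬ (false = true) by simp), hA]
      rw [nsmul_add, nsmul_left_comm, nsmul_left_comm _ j N]; rfl
    · simp only [F, tb, map_add, map_nsmul, if_true, hA]
      rw [nsmul_add, nsmul_left_comm, nsmul_left_comm _ j N]; rfl
  obtain ⟨b0, hb0, ht, _⟩ := isTop_sum hWi hne hc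
    (B := fun b => Phi α (mon (xA k) (yA k) (zA k) b)) (g := F)
    (fun b _ => by
      obtain ⟨b, i, j⟩ := b
      simp only [mon, map_mul, map_pow, F]
      refine IsTop.mul hWi (IsTop.pow hWi ?_ _) ((hT 2).pow hWi _)
      cases b
      · exact hT 0
      · exact hT 1)
    (fun b hb b' hb' h => tb_injOn (hs b hb) (hs b' hb') (by
      apply hD
      apply nsmul_inj_of hN
      rw [← hFA, ← hFA, h]))
  have e2 : ∑ b ∈ s, c b • Phi α (mon (xA k) (yA k) (zA k) b) =
      incl k (io k (jj k (α (xA k)))) := by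
    rw [← JA_apply]
    have : Phi α (α (xA k)) = JA α (xA k) := by rw [Phi_α, Theta, liftA_x]
    rw [← this, e, map_sum]
    simp only [map_smul]
  simp only [e2] at ht
  have hσ : (F b0).2 = 0 := by
    have h := ht.1
    rw [← Prod.mk.eta (p := F b0), incl_coeff] at h
    by_contra hcon
    rw [if_neg hcon] at h
    exact h rfl
  have hFb : F b0 = (tb b0, 0) := by
    refine Prod.ext ?_ hσ
    apply hD
    apply nsmul_inj_of hN
    rw [← hFA]
    change _ = N • D (F b0).1 - (F b0).2 • κ
    rw [hσ, zero_nsmul, sub_zero]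
  have htopf : IsTop D (io k (jj k (α (xA k)))) (tb b0) := by
    constructor
    · have h := ht.1
      rw [hFb, incl_coeff, if_pos rfl] at h
      exact h
    · intro g' hg'
      have h := ht.2 (g', 0) (by rw [incl_coeff, if_pos rfl]; exact hg')
      have h2 := hWle _ _ h
      rw [hFb] at h2
      change N • D g' - 0 • κ ≤ N • D (tb b0) - 0 • κ at h2
      rw [zero_nsmul, sub_zero, sub_zero] at h2
      exact (nsmul_le_nsmul_iff_right hN).1 h2
  obtain ⟨b, i, j⟩ := b0
  have hj : j = 0 := by
    simp only [F, Prod.snd_add, Prod.smul_snd, Nat.add_eq_zero_iff, smul_eq_mul] at hσ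
    have := hσ.2
    rcases Nat.mul_eq_zero.1 this with h | h
    · exact h
    · exact absurd h hn2
  subst hj
  refine ⟨i, ?_⟩
  cases b
  · left
    convert htopf using 1
    simp [tb]; ring
  · right
    convert htopf using 1
    simp [tb]

end Vertex
end Q2Lines

namespace Q2Lines
set_option linter.unusedSectionVars false
set_option linter.unusedVariables false
section Delta

variable {k : Type*} [Field k]

/-- the `T`-degree order -/
def Dd : ℤ × ℤ →+ ℤ ×ₗ ℤ := lexD (lin 0 1) (lin 1 0)

theorem Dd_inj : Function.Injective Dd :=
  lexD_inj _ _ (fun x y h1 h2 => by simp at h1 h2; exact Prod.ext h2 h1)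

theorem Dd_le {x y : ℤ × ℤ} (h : Dd x ≤ Dd y) : x.2 ≤ y.2 := by
  rw [Dd, lexD_le] at h
  simp at h
  omega

def DLe (q : PP k) (n : ℤ) : Prop := ∀ g, (io k q).coeff g ≠ 0 → g.2 ≤ n
def DEq (q : PP k) (n : ℤ) : Prop := ∃ y, IsTop Dd (io k q) (y, n)

theorem DEq.le {q : PP k} {n : ℤ} (h : DEq q n) : DLe q n := by
  obtain ⟨y, hy⟩ := h
  intro g hg
  exact Dd_le (hy.2 g hg)

theorem DEq.le_of_DLe {q : PP k} {n m : ℤ} (h : DEq q n) (h' : DLe q m) : n ≤ m := by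
  obtain ⟨y, hy⟩ := h
  exact h' _ hy.1

theorem exists_DEq {q : PP k} (h : q ≠ 0) : ∃ n, DEq q n := by
  have : io k q ≠ 0 := fun h0 => h (io_inj (h0.trans (map_zero _).symm))
  obtain ⟨⟨y, n⟩, hy⟩ := exists_isTop Dd this
  exact ⟨n, y, hy⟩

theorem DEq.mul {p q : PP k} {n m : ℤ} (h : DEq p n) (h' : DEq q m) : DEq (p * q) (n + m) := by
  obtain ⟨y, hy⟩ := h
  obtain ⟨z, hz⟩ := h'
  refine ⟨y + z, ?_⟩
  rw [map_mul]
  exact hy.mul Dd_inj hz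

theorem DEq.unique {p : PP k} {n m : ℤ} (h : DEq p n) (h' : DEq p m) : n = m :=
  le_antisymm (h.le_of_DLe h'.le) (h'.le_of_DLe h.le)

theorem DLe.mono {p : PP k} {n m : ℤ} (h : DLe p n) (hm : n ≤ m) : DLe p m :=
  fun g hg => (h g hg).trans hm

theorem DLe.mul {p q : PP k} {n m : ℤ} (h : DLe p n) (h' : DLe q m) : DLe (p * q) (n + m) := by
  intro g hg
  rw [map_mul] at hg
  obtain ⟨a, b, ha, hb, rfl⟩ := coeff_mul_ne_zero hg
  exact add_le_add (h a ha) (h' b hb)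

theorem DEq_one : DEq (1 : PP k) 0 := ⟨0, by rw [map_one]; exact isTop_one Dd⟩

theorem DLe.pow {p : PP k} {n : ℤ} (h : DLe p n) (i : ℕ) : DLe (p ^ i) (i * n) := by
  induction i with
  | zero => simpa using DEq_one.le
  | succ i ih =>
    rw [pow_succ]
    refine (ih.mul h).mono (le_of_eq ?_)
    push_cast; ring

theorem DLe.smul {p : PP k} {n : ℤ} (h : DLe p n) (c : k) : DLe (c • p) n := by
  intro g hg
  apply h g
  intro h0
  apply hg
  rw [map_smul, AddMonoidAlgebra.coeff_smul, Finsupp.smul_apply, h0, smul_zero]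

theorem DLe.add {p q : PP k} {n : ℤ} (h : DLe p n) (h' : DLe q n) : DLe (p + q) n := by
  intro g hg
  by_cases h1 : (io k p).coeff g = 0
  · apply h' g
    intro h2
    apply hg
    rw [map_add, AddMonoidAlgebra.coeff_add, Finsupp.add_apply, h1, h2, add_zero]
  · exact h g h1

theorem DLe_zero (n : ℤ) : DLe (0 : PP k) n := by
  intro g hg
  rw [map_zero] at hg
  exact absurd rfl hg

theorem DLe.sum {ι : Type*} {s : Finset ι} {p : ι → PP k} {n : ℤ} (h : ∀ i ∈ s, DLe (p i) n) :
    DLe (∑ i ∈ s, p i) n := by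
  classical
  induction s using Finset.induction_on with
  | empty => simpa using DLe_zero n
  | insert a s ha ih =>
    rw [Finset.sum_insert ha]
    exact (h a (by simp)).add (ih fun i hi => h i (by simp [hi]))

theorem DEq_X : DEq (X 0 : PP k) (-1) := by
  refine ⟨0, ?_⟩
  rw [io_X]
  apply isTop_sg_sub' Dd_inj
  rw [Dd, lexD_lt]; simp

theorem DEq_T : DEq (X 1 : PP k) 1 := ⟨0, by rw [io_T]; exact isTop_sg _ _ _⟩
theorem DEq_V : DEq (pV k) (-1) := ⟨1, by rw [io_V]; exact isTop_sg _ _ _⟩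

theorem DLe_jj (a : Q2Ring k) : DLe (jj k a) 0 := by
  obtain ⟨s, c, hs, hc, e⟩ := expandA a
  rw [e, map_sum]
  apply DLe.sum
  intro b _
  rw [map_smul]
  apply DLe.smul
  have hz : DLe (jj k (zA k)) 0 := by
    rw [jj_z]; simpa using (DEq_X.mul DEq_T).le
  have hx : DLe (jj k (xA k)) 0 := by
    rw [jj_x]; exact DEq_X.le.mono (by norm_num)
  have hy : DLe (jj k (yA k)) 0 := by
    have : pT k + pX k * pT k ^ 2 = pV k * X 1 := by rw [pV]; ring
    rw [jj_y, this]
    simpa using (DEq_V.mul DEq_T).le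
  obtain ⟨b, i, j⟩ := b
  simp only [mon, map_mul, map_pow]
  have h1 : DLe (jj k (if b = true then yA k else xA k)) 0 := by
    cases b
    · exact hx
    · exact hy
  simpa using (h1.pow i).mul (hz.pow j)

/-- leading exponent of `X^i V^p` or `T^i V^p` -/
def td (b : Bool × ℕ × ℕ) : ℤ × ℤ :=
  b.2.1 • (if b.1 then ((0, 1) : ℤ × ℤ) else (0, -1)) + b.2.2 • ((1, -1) : ℤ × ℤ)

theorem td_injOn {b b' : Bool × ℕ × ℕ} (hb : NF b) (hb' : NF b') (h : td b = td b') : b = b' := by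
  obtain ⟨b, i, j⟩ := b
  obtain ⟨b', i', j'⟩ := b'
  cases b <;> cases b' <;> simp [td, NF] at h hb hb' ⊢ <;> omega

theorem expandP_DLe {q : PP k} {n : ℤ} (h : DLe q n) :
    ∃ (s : Finset (Bool × ℕ × ℕ)) (c : Bool × ℕ × ℕ → k), (∀ b ∈ s, (td b).2 ≤ n) ∧
      q = ∑ b ∈ s, c b • mon (pX k) (pT k) (pV k) b := by
  obtain ⟨s, c, hs, hc, e⟩ := expandP q
  refine ⟨s, c, ?_, e⟩
  intro b hb
  obtain ⟨b0, hb0, ht, hmax⟩ := isTop_sum Dd_inj ⟨b, hb⟩ hc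
    (B := fun b => io k (mon (pX k) (pT k) (pV k) b)) (g := td)
    (fun b _ => by
      obtain ⟨b, i, j⟩ := b
      simp only [mon, map_mul, map_pow]
      refine IsTop.mul Dd_inj (IsTop.pow Dd_inj ?_ _) (IsTop.pow Dd_inj ?_ _)
      · cases b
        · have : IsTop Dd (io k (X 0)) (0, -1) := by
            rw [io_X]
            apply isTop_sg_sub' Dd_inj
            rw [Dd, lexD_lt]; simp
          simpa using this
        · simpa using top_T
      · rw [io_V]; exact isTop_sg _ _ _)
    (fun b hb b' hb' h => td_injOn (hs b hb) (hs b' hb') h)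
  have e2 : ∑ b ∈ s, c b • io k (mon (pX k) (pT k) (pV k) b) = io k q := by
    rw [e, map_sum]; simp only [map_smul]
  simp only [e2] at ht
  exact (Dd_le (hmax b hb)).trans (h _ ht.1)

/-- The factorisation data attached to an automorphism. -/
structure FD (α : Q2Ring k ≃ₐ[k] Q2Ring k) where
  m : PP k
  m' : PP k
  c : PP k
  n : PP k
  e : ℤ
  hx : jj k (α (xA k)) = m * m'
  hz1 : jj k (α (zA k)) + 1 = m * n
  hz : jj k (α (zA k)) = m' * c
  hy : jj k (α (yA k)) = c * n
  dm : DLe m e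
  dm' : DLe m' (-e)
  dc : DLe c e
  dn : DLe n (-e)

theorem jα_ne (α : Q2Ring k ≃ₐ[k] Q2Ring k) {a : Q2Ring k} (h : jj k a ≠ 0) : jj k (α a) ≠ 0 := by
  intro h0
  have := jj_inj (h0.trans (map_zero _).symm)
  rw [EmbeddingLike.map_eq_zero_iff] at this
  rw [this] at h
  exact h (map_zero _)

theorem pV_ne : pV k ≠ 0 := by
  obtain ⟨y, h⟩ := DEq_V (k := k)
  intro h0; rw [h0] at h; exact h.ne_zero (map_zero _)

theorem exists_FD (α : Q2Ring k ≃ₐ[k] Q2Ring k) : Nonempty (FD α) := by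
  set f := jj k (α (xA k)) with hf
  set g := jj k (α (zA k)) with hg
  set h := jj k (α (yA k)) with hh
  have hf0 : f ≠ 0 := jα_ne α (by simp)
  have hg0 : g ≠ 0 := jα_ne α (by simp)
  have hg1 : g + 1 ≠ 0 := by
    have : g + 1 = jj k (α (zA k + 1)) := by simp [hg]
    rw [this]
    apply jα_ne
    have : jj k (zA k + 1) = pV k := by simp [pV]; ring
    rw [this]; exact pV_ne
  have hrel : f * h = g * (g + 1) := by
    have := congrArg (fun a => jj k (α a)) (relA (k := k))
    simpa using this
  have hh0 : h ≠ 0 := by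
    intro h0
    rw [h0, mul_zero] at hrel
    exact mul_ne_zero hg0 hg1 hrel.symm
  obtain ⟨m', m, ⟨c, hc⟩, ⟨n, hn⟩, hmm⟩ := exists_dvd_and_dvd_of_dvd_mul (Dvd.intro _ hrel)
  have hm0 : m ≠ 0 := by rintro rfl; simp at hmm; exact hf0 hmm
  have hm'0 : m' ≠ 0 := by rintro rfl; simp at hmm; exact hf0 hmm
  have hc0 : c ≠ 0 := by rintro rfl; simp at hc; exact hg0 hc
  have hn0 : n ≠ 0 := by rintro rfl; simp at hn; exact hg1 hn
  have hcn : h = c * n := by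
    apply mul_left_cancel₀ hf0
    rw [hrel, hn, hmm, hc]; ring
  obtain ⟨a, ha⟩ := exists_DEq hm0
  obtain ⟨a', ha'⟩ := exists_DEq hm'0
  obtain ⟨b, hb⟩ := exists_DEq hc0
  obtain ⟨d, hd⟩ := exists_DEq hn0
  have i1 : a' + a ≤ 0 := (ha'.mul ha).le_of_DLe (by rw [← hmm]; exact DLe_jj _)
  have i2 : b + d ≤ 0 := (hb.mul hd).le_of_DLe (by rw [← hcn]; exact DLe_jj _)
  have i3 : a + d ≤ 0 := (ha.mul hd).le_of_DLe (by
    rw [← hn]; exact (DLe_jj _).add DEq_one.le)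
  have i4 : a' + b ≤ 0 := (ha'.mul hb).le_of_DLe (by rw [← hc]; exact DLe_jj _)
  have key : 0 ≤ a + d ∨ 0 ≤ a' + b := by
    by_contra hcon
    push Not at hcon
    have h1 : DLe (g + 1) (-1) := by rw [hn]; exact (ha.mul hd).le.mono (by omega)
    have h2 : DLe g (-1) := by rw [hc]; exact (ha'.mul hb).le.mono (by omega)
    have h3 : DLe (1 : PP k) (-1) := by
      have : (1 : PP k) = (g + 1) + (-1 : k) • g := by rw [neg_smul, one_smul]; ring
      rw [this]; exact h1.add (h2.smul _)
    have := DEq_one.le_of_DLe h3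
    omega
  rcases key with hk | hk
  · exact ⟨⟨m, m', c, n, a, by rw [← hf, hmm, mul_comm], hn, hc, hcn, ha.le, ha'.le.mono (by omega),
      hb.le.mono (by omega), hd.le.mono (by omega)⟩⟩
  · exact ⟨⟨m, m', c, n, -a', by rw [← hf, hmm, mul_comm], hn, hc, hcn, ha.le.mono (by omega),
      ha'.le.mono (by omega), hb.le.mono (by omega), hd.le.mono (by omega)⟩⟩

namespace FD

variable {α : Q2Ring k ≃ₐ[k] Q2Ring k} (d : FD α)

abbrev KK (k : Type*) [Field k] := FractionRing (PP k)

abbrev up : PP k →ₐ[k] KK k := IsScalarTower.toAlgHom k (PP k) (KK k)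

theorem up_inj : Function.Injective (up (k := k)) := IsFractionRing.injective (PP k) (KK k)

theorem m_ne : d.m ≠ 0 := by
  intro h
  have := d.hx
  rw [h, zero_mul] at this
  exact jα_ne α (by simp) this

theorem upm_ne : up d.m ≠ 0 := fun h => d.m_ne (up_inj (h.trans (map_zero _).symm))

def Psi : PP k →ₐ[k] KK k := aeval ![up (d.m * d.m'), up d.c / up d.m]

theorem Psi_X : d.Psi (X 0) = up (d.m * d.m') := by simp [Psi]
theorem Psi_T : d.Psi (X 1) = up d.c / up d.m := by simp [Psi]

theorem Psi_XT : d.Psi (X 0 * X 1) = up (d.m' * d.c) := by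
  rw [map_mul, Psi_X, Psi_T, map_mul, map_mul]
  have hne := d.upm_ne
  field_simp

theorem Psi_V : d.Psi (pV k) = up (d.m * d.n) := by
  rw [pV, map_add, Psi_XT, ← d.hz, ← d.hz1]
  simp [add_comm]

theorem Psi_jj (a : Q2Ring k) : d.Psi (jj k a) = up (jj k (α a)) := by
  have : d.Psi.comp (jj k) = up.comp ((jj k).comp α.toAlgHom) := by
    apply homA_ext
    · simp [Psi_X, d.hx]
    · have e : pT k + pX k * pT k ^ 2 = pV k * X 1 := by rw [pV]; ring
      simp only [AlgHom.comp_apply, jj_y, e]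
      have h2 : (jj k) (α.toAlgHom (yA k)) = d.c * d.n := d.hy
      rw [h2, map_mul, Psi_V, Psi_T, map_mul, map_mul]
      have hne := d.upm_ne
      field_simp
    · simp only [AlgHom.comp_apply, jj_z, Psi_XT]
      have h2 : (jj k) (α.toAlgHom (zA k)) = d.m' * d.c := d.hz
      rw [h2]
  exact DFunLike.congr_fun this a

theorem clear {q : PP k} {N : ℤ} (h : DLe q N) :
    ∃ r : PP k, DLe r (d.e * N) ∧ up r = (up d.m) ^ N * d.Psi q := by
  obtain ⟨s, c, hs, hq⟩ := expandP_DLe h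
  have main : ∀ b ∈ s, ∃ r : PP k, DLe r (d.e * N) ∧
      up r = (up d.m) ^ N * d.Psi (mon (pX k) (pT k) (pV k) b) := by
    rintro ⟨b, i, p⟩ hb
    have hle := hs _ hb
    have hne := d.upm_ne
    cases b
    · simp [td] at hle
      obtain ⟨w, hw⟩ := Int.eq_ofNat_of_zero_le (show 0 ≤ N + i + p by omega)
      refine ⟨d.m ^ w * d.m' ^ i * d.n ^ p, ?_, ?_⟩
      · refine (((d.dm.pow w).mul (d.dm'.pow i)).mul (d.dn.pow p)).mono (le_of_eq ?_)
        rw [← hw]; ring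
      · simp only [mon, map_mul, map_pow]
        simp only [pX, Bool.false_eq_true, if_false, Psi_X, Psi_V, map_mul]
        have : up d.m ^ N = up d.m ^ w * (up d.m ^ i)⁻¹ * (up d.m ^ p)⁻¹ := by
          have : N = w - i - p := by rw [← hw]; ring
          rw [this, zpow_sub₀ hne, zpow_sub₀ hne]
          simp [div_eq_mul_inv]
        rw [this, mul_pow, mul_pow]
        field_simp
    · simp [td] at hle
      obtain ⟨w, hw⟩ := Int.eq_ofNat_of_zero_le (show 0 ≤ N - i + p by omega)
      refine ⟨d.m ^ w * d.c ^ i * d.n ^ p, ?_, ?_⟩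
      · refine (((d.dm.pow w).mul (d.dc.pow i)).mul (d.dn.pow p)).mono (le_of_eq ?_)
        rw [← hw]; ring
      · simp only [mon, map_mul, map_pow]
        simp only [pT, if_true, Psi_T, Psi_V, map_mul]
        have : up d.m ^ N = up d.m ^ w * up d.m ^ i * (up d.m ^ p)⁻¹ := by
          have : N = w + i - p := by rw [← hw]; ring
          rw [this, zpow_sub₀ hne, zpow_add₀ hne]
          simp [div_eq_mul_inv]
        rw [this, mul_pow, div_pow]
        field_simp
  choose! r hr1 hr2 using main
  refine ⟨∑ b ∈ s, c b • r b, DLe.sum fun b hb => (hr1 b hb).smul _, ?_⟩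
  rw [hq, map_sum, map_sum, Finset.mul_sum]
  apply Finset.sum_congr rfl
  intro b hb
  rw [map_smul, map_smul, hr2 b hb, mul_smul_comm]

theorem e_pm (d1 : FD α.symm) : d.e = 1 ∨ d.e = -1 := by
  have hne := d.upm_ne
  obtain ⟨a2, ha, ha'⟩ := d.clear d1.dm
  obtain ⟨b2, hb, hb'⟩ := d.clear d1.dm'
  obtain ⟨c2, hc, hc'⟩ := d.clear d1.dc
  obtain ⟨d2, hd, hd'⟩ := d.clear d1.dn
  have hcanc : up d.m ^ d1.e * up d.m ^ (-d1.e) = 1 := by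
    rw [← zpow_add₀ hne]; simp
  have e1 : a2 * b2 = X 0 := by
    apply up_inj
    have := d.Psi_jj (α.symm (xA k))
    rw [d1.hx, map_mul] at this
    simp only [AlgEquiv.apply_symm_apply, jj_x] at this
    rw [← this, map_mul, ha', hb']
    linear_combination (d.Psi d1.m * d.Psi d1.m') * hcanc
  have e2 : b2 * c2 = X 0 * X 1 := by
    apply up_inj
    have := d.Psi_jj (α.symm (zA k))
    rw [d1.hz, map_mul] at this
    simp only [AlgEquiv.apply_symm_apply, jj_z] at this
    rw [← this, map_mul, hc', hb']
    linear_combination (d.Psi d1.c * d.Psi d1.m') * hcanc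
  have e3 : a2 * d2 = 1 + X 0 * X 1 := by
    apply up_inj
    have := d.Psi_jj (α.symm (zA k))
    have h4 := congrArg d.Psi d1.hz1
    rw [map_add, this] at h4
    simp only [AlgEquiv.apply_symm_apply, jj_z, map_one, map_mul d.Psi] at h4
    have h5 : up (1 + X 0 * X 1 : PP k) = up (X 0 * X 1) + 1 := by rw [map_add, map_one, add_comm]
    rw [h5, h4, map_mul, ha', hd']
    linear_combination (d.Psi d1.m * d.Psi d1.n) * hcanc
  have hXp : Prime (X 0 : PP k) := MvPolynomial.X_prime
  have hXa : ¬ (X 0 ∣ a2) := by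
    intro h
    have h1 : (X 0 : PP k) ∣ 1 + X 0 * X 1 := by rw [← e3]; exact h.mul_right _
    have h2 := (dvd_add_left (Dvd.intro _ rfl : (X 0 : PP k) ∣ X 0 * X 1)).1 h1
    exact hXp.not_isUnit (isUnit_of_dvd_one h2)
  have hua : IsUnit a2 := by
    rcases hXp.irreducible.isUnit_or_isUnit e1.symm with h | h
    · exact h
    · exfalso
      apply hXa
      rw [← e1]
      exact (h.mul_right_dvd).2 dvd_rfl
  have hX0 : (X 0 : PP k) ≠ 0 := hXp.ne_zero
  have hDa : DEq a2 0 := by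
    obtain ⟨u, hu, hu2⟩ := (MvPolynomial.isUnit_iff_eq_C_of_isReduced).1 hua
    rw [hu2]
    refine ⟨0, ?_⟩
    have : io k (C u) = AddMonoidAlgebra.single (0, 0) u := by
      rw [← MvPolynomial.algebraMap_eq, AlgHom.commutes]; rfl
    rw [this]
    exact isTop_single _ _ hu.ne_zero
  have e4 : c2 = a2 * X 1 := by
    apply mul_left_cancel₀ hX0
    linear_combination a2 * e2 - c2 * e1
  have h1 : DEq c2 1 := by rw [e4]; simpa using hDa.mul DEq_T
  have hd0 : d2 ≠ 0 := by
    rintro rfl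
    rw [mul_zero] at e3
    exact pV_ne e3.symm
  obtain ⟨w, hw⟩ := exists_DEq hd0
  have h2 : 0 + w = -1 := by
    have := hDa.mul hw
    rw [e3] at this
    exact this.unique DEq_V
  have i1 := h1.le_of_DLe hc
  have i2 := hw.le_of_DLe hd
  have : d.e * d1.e = 1 := by
    rw [mul_neg] at i2; omega
  exact Int.isUnit_iff.1 (IsUnit.of_mul_eq_one _ this)

end FD

theorem factor_pm (α : Q2Ring k ≃ₐ[k] Q2Ring k) :
    ∃ p q : PP k, jj k (α (xA k)) = p * q ∧ DLe p 1 ∧ DLe q (-1) := by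
  obtain ⟨d⟩ := exists_FD α
  obtain ⟨d1⟩ := exists_FD α.symm
  have h1 := d.dm
  have h2 := d.dm'
  rcases d.e_pm d1 with h | h
  · rw [h] at h1 h2
    exact ⟨d.m, d.m', d.hx, h1, h2⟩
  · rw [h] at h1 h2
    exact ⟨d.m', d.m, by rw [d.hx, mul_comm], by simpa using h2, h1⟩

end Delta
end Q2Lines

namespace Q2Lines
set_option linter.unusedSectionVars false
set_option linter.unusedVariables false
section Finish

variable {k : Type*} [Field k]

/-- weight of a monomial `X^u T^v` -/
def wt (r : ℕ) (m : Fin 2 →₀ ℕ) : ℕ := r * m 0 + m 1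

theorem degree_ee {r : ℕ} {x : Polynomial k} (hx : x.Monic) (hr : x.natDegree = r) {q : PP k}
    {m : Fin 2 →₀ ℕ} (hm : m ∈ q.support)
    (hmax : ∀ m' ∈ q.support, m' ≠ m → wt r m' < wt r m) :
    (ee x q).degree = (wt r m : ℕ) := by
  classical
  have hmon : ∀ m' ∈ q.support, (ee x (monomial m' (q.coeff m'))).degree = (wt r m' : ℕ) := by
    intro m' hm'
    have e : monomial m' (q.coeff m') = C (q.coeff m') * (X 0 ^ (m' 0) * X 1 ^ (m' 1)) := by
      rw [monomial_eq, Finsupp.prod_fintype _ _ (by simp)]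
      simp
    have hc : q.coeff m' ≠ 0 := by simpa using hm'
    rw [e, map_mul, map_mul, map_pow, map_pow, ee_X, ee_T, ← MvPolynomial.algebraMap_eq,
      AlgHom.commutes, Polynomial.algebraMap_eq, Polynomial.degree_C_mul hc, Polynomial.degree_mul,
      Polynomial.degree_pow, Polynomial.degree_pow, Polynomial.degree_X,
      Polynomial.degree_eq_natDegree hx.ne_zero, hr, wt]
    push_cast
    simp [mul_comm]
  have e : ee x q = ee x (monomial m (q.coeff m)) +
      ∑ m' ∈ q.support.erase m, ee x (monomial m' (q.coeff m')) := by
    conv_lhs => rw [q.as_sum]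
    rw [map_sum, ← Finset.add_sum_erase _ _ hm]
  rw [e, Polynomial.degree_add_eq_left_of_degree_lt, hmon m hm]
  refine (Polynomial.degree_sum_le _ _).trans_lt ?_
  rw [hmon m hm, Finset.sup_lt_iff (WithBot.bot_lt_coe _)]
  intro m' hm'
  rw [Finset.mem_erase] at hm'
  rw [hmon m' hm'.2]
  exact_mod_cast hmax m' hm'.2 hm'.1

def Dw (r : ℕ) (s : ℤ) : ℤ × ℤ →+ ℤ ×ₗ ℤ := lexD (lin (r + 2) 1) (lin s 0)

theorem Dw_inj (r : ℕ) {s : ℤ} (hs : s ≠ 0) : Function.Injective (Dw r s) := by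
  apply lexD_inj
  rintro ⟨y, t⟩ ⟨y', t'⟩ h1 h2
  simp [hs] at h1 h2
  subst h2
  simpa using h1

theorem Dw_pos (r : ℕ) (s : ℤ) : 0 < Dw r s (1, -1) := by
  rw [← map_zero (Dw r s), Dw, lexD_lt]
  left; simp; omega

theorem Dw_expo_le {r : ℕ} {s : ℤ} {m m' : Fin 2 →₀ ℕ} (h : Dw r s (expo m') ≤ Dw r s (expo m)) :
    wt r m' ≤ wt r m ∧ (wt r m' = wt r m → s * m' 0 ≤ s * m 0) := by
  rw [Dw, lexD_le] at h
  simp only [lin_apply, expo, wt] at h ⊢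
  have e1 : ((r : ℤ) + 2) * (m' 0) + 1 * ((m' 1) - 2 * (m' 0)) = ((r * m' 0 + m' 1 : ℕ) : ℤ) := by
    push_cast; ring
  have e2 : ((r : ℤ) + 2) * (m 0) + 1 * ((m 1) - 2 * (m 0)) = ((r * m 0 + m 1 : ℕ) : ℤ) := by
    push_cast; ring
  rw [e1, e2] at h
  simp only [zero_mul, add_zero] at h
  constructor
  · omega
  · intro he
    rcases h with h | h
    · omega
    · exact h.2

theorem types {α : Q2Ring k ≃ₐ[k] Q2Ring k} {p q : PP k} (hf : jj k (α (xA k)) = p * q)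
    (hp : DLe p 1) (hq : DLe q (-1)) (r : ℕ) {s : ℤ} (hs : s ≠ 0) :
    ∃ mp ∈ p.support, ∃ mq ∈ q.support,
      (∀ m' ∈ p.support, wt r m' ≤ wt r mp ∧ (wt r m' = wt r mp → s * m' 0 ≤ s * mp 0)) ∧
      (∀ m' ∈ q.support, wt r m' ≤ wt r mq ∧ (wt r m' = wt r mq → s * m' 0 ≤ s * mq 0)) ∧
      ((mp 1 = 0 ∧ mq 1 = 0 ∧ mq 0 ≠ 0) ∨ (mp 1 = 2 * mp 0 + 1 ∧ mq 1 + 1 = 2 * mq 0)) := by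
  have hf0 : jj k (α (xA k)) ≠ 0 := jα_ne α (by simp)
  have hp0 : p ≠ 0 := by rintro rfl; rw [zero_mul] at hf; exact hf0 hf
  have hq0 : q ≠ 0 := by rintro rfl; rw [mul_zero] at hf; exact hf0 hf
  have hD := Dw_inj r hs
  have hpos := Dw_pos r s
  obtain ⟨mp, hmp, tp, hpmax⟩ := top_io hD hpos hp0
  obtain ⟨mq, hmq, tq, hqmax⟩ := top_io hD hpos hq0
  refine ⟨mp, hmp, mq, hmq, fun m' h' => Dw_expo_le (hpmax m' h'),
    fun m' h' => Dw_expo_le (hqmax m' h'), ?_⟩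
  have tpq := tp.mul hD tq
  rw [← map_mul, ← hf] at tpq
  have i1 := hp _ tp.1
  have i2 := hq _ tq.1
  simp only [expo] at i1 i2 tpq
  obtain ⟨i, h | h⟩ := vertex hD hpos α
  · have e := tpq.unique hD h
    simp at e
    left
    omega
  · have e := tpq.unique hD h
    simp at e
    right
    omega

theorem core {α : Q2Ring k ≃ₐ[k] Q2Ring k} {p q : PP k} (hf : jj k (α (xA k)) = p * q)
    (hp : DLe p 1) (hq : DLe q (-1)) {r ρ : ℕ} (hr : r = 2 * ρ) (hρ : ρ ≠ 0) :
    ∃ mp ∈ p.support, ∃ mq ∈ q.support,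
      (∀ m' ∈ p.support, m' ≠ mp → wt r m' < wt r mp) ∧
      (∀ m' ∈ q.support, m' ≠ mq → wt r m' < wt r mq) ∧ r ≤ wt r mq ∧
      (wt r mq = r → mq 0 = 1 ∧ mq 1 = 0) := by
  obtain ⟨mp, hmp, mq, hmq, mxp, mxq, ty⟩ := types hf hp hq r (s := 1) (by norm_num)
  obtain ⟨mp', hmp', mq', hmq', mxp', mxq', ty'⟩ := types hf hp hq r (s := -1) (by norm_num)
  have wp : wt r mp = wt r mp' := le_antisymm (mxp' mp hmp).1 (mxp mp' hmp').1
  have wq : wt r mq = wt r mq' := le_antisymm (mxq' mq hmq).1 (mxq mq' hmq').1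
  have same : mp 0 = mp' 0 ∧ mq 0 = mq' 0 := by
    have hr0 : 0 < 2 * ρ := by omega
    have hr1 : 0 < ρ + 1 := by omega
    simp only [wt, hr] at wp wq
    rcases ty with ⟨a, b, c⟩ | ⟨a, b⟩ <;> rcases ty' with ⟨a', b', c'⟩ | ⟨a', b'⟩
    · rw [a, a'] at wp
      rw [b, b'] at wq
      exact ⟨Nat.eq_of_mul_eq_mul_left hr0 (by omega), Nat.eq_of_mul_eq_mul_left hr0 (by omega)⟩
    · exfalso
      rw [mul_assoc, mul_assoc, a, a'] at wp
      omega
    · exfalso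
      rw [mul_assoc, mul_assoc, a, a'] at wp
      omega
    · constructor
      · rw [a, a'] at wp
        exact Nat.eq_of_mul_eq_mul_left hr1 (by linarith)
      · exact Nat.eq_of_mul_eq_mul_left hr1 (by linarith)
  have uniq : ∀ {m m' : Fin 2 →₀ ℕ}, wt r m = wt r m' → m 0 = m' 0 → m = m' := by
    intro m m' h1 h2
    simp only [wt, h2] at h1
    ext i
    fin_cases i
    · exact h2
    · simpa using h1
  have ep := uniq wp same.1
  have eq := uniq wq same.2
  subst ep
  subst eq
  refine ⟨mp, hmp, mq, hmq, ?_, ?_, ?_, ?_⟩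
  · intro m' h' hne
    refine lt_of_le_of_ne (mxp m' h').1 fun he => hne (uniq he ?_)
    have h1 := (mxp m' h').2 he
    have h2 := (mxp' m' h').2 he
    omega
  · intro m' h' hne
    refine lt_of_le_of_ne (mxq m' h').1 fun he => hne (uniq he ?_)
    have h1 := (mxq m' h').2 he
    have h2 := (mxq' m' h').2 he
    omega
  · rcases ty with ⟨a, b, c⟩ | ⟨a, b⟩
    · simp only [wt]
      have : r * 1 ≤ r * mq 0 := Nat.mul_le_mul_left _ (by omega)
      omega
    · simp only [wt]
      have : r * 1 ≤ r * mq 0 := Nat.mul_le_mul_left _ (by omega)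
      omega
  · intro hw
    simp only [wt] at hw
    rcases ty with ⟨a, b, c⟩ | ⟨a, b⟩
    · refine ⟨?_, b⟩
      rw [b, add_zero] at hw
      exact Nat.eq_of_mul_eq_mul_left (show 0 < r by omega) (by omega)
    · exfalso
      have : r * 1 ≤ r * mq 0 := Nat.mul_le_mul_left _ (by omega)
      omega

theorem main_deg (α : Q2Ring k ≃ₐ[k] Q2Ring k) {r ρ : ℕ} (hr : r = 2 * ρ) (hρ : ρ ≠ 0)
    {x : Polynomial k} (hx : x.Monic) (hxr : x.natDegree = r) :
    r ≤ (ee x (jj k (α (xA k)))).natDegree ∧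
    ((ee x (jj k (α (xA k)))).natDegree = r → ∃ c : k, jj k (α (xA k)) = C c * X 0) := by
  classical
  obtain ⟨p, q, hf, hp, hq⟩ := factor_pm α
  obtain ⟨mp, hmp, mq, hmq, up, uq, hle, heq⟩ := core hf hp hq hr hρ
  have hdeg : (ee x (jj k (α (xA k)))).natDegree = wt r mp + wt r mq := by
    apply Polynomial.natDegree_eq_of_degree_eq_some
    rw [hf, map_mul, Polynomial.degree_mul, degree_ee hx hxr hmp up, degree_ee hx hxr hmq uq]
    push_cast; rfl
  refine ⟨by omega, fun hd => ?_⟩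
  have w1 : wt r mp = 0 := by omega
  have w2 : wt r mq = r := by omega
  have hr0 : 0 < r := by omega
  have hpC : p = C (p.coeff 0) := by
    have z : mp = 0 := by
      simp only [wt, Nat.add_eq_zero_iff, Nat.mul_eq_zero] at w1
      ext i
      fin_cases i
      · simp; omega
      · simp; omega
    ext m
    rw [coeff_C]
    split_ifs with h
    · rw [← h]
    · by_contra hne
      have := up m (by simpa using hne) (by rw [z]; exact fun e => h e.symm)
      omega
  obtain ⟨q0, q1⟩ := heq w2
  have hmqe : mq = Finsupp.single 0 1 := by
    ext i
    fin_cases i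
    · simpa using q0
    · simpa using q1
  have hqX : q = C (q.coeff mq) * X 0 := by
    set U := q - C (q.coeff mq) * X 0 with hU
    have hUD : DLe U (-1) := by
      have : U = q + (-(q.coeff mq)) • X 0 := by
        rw [hU, MvPolynomial.C_mul', neg_smul, sub_eq_add_neg]
      rw [this]
      exact hq.add (DEq_X.le.smul _)
    have hUc : ∀ m, U.coeff m = if m = mq then 0 else q.coeff m := by
      intro m
      rw [hU, coeff_sub, coeff_C_mul, coeff_X, ← hmqe]
      split_ifs with h1 h2 h2
      · rw [h2]; simp
      · exact absurd h1.symm h2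
      · exact absurd h2.symm h1
      · simp
    have hU0 : U = 0 := by
      by_contra hne
      obtain ⟨m, hm, ht, _⟩ := top_io (Dw_inj r one_ne_zero) (Dw_pos r 1) hne
      have i1 := hUD _ ht.1
      have hm2 : U.coeff m ≠ 0 := by simpa using hm
      rw [hUc] at hm2
      split_ifs at hm2 with h1
      · exact hm2 rfl
      · have := uq m (by simpa using hm2) h1
        rw [w2, wt] at this
        have m0 : m 0 = 0 := by
          by_contra h
          have : r * 1 ≤ r * m 0 := Nat.mul_le_mul_left _ (by omega)
          omega
        simp only [expo] at i1
        omega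
    exact sub_eq_zero.1 hU0
  refine ⟨p.coeff 0 * q.coeff mq, ?_⟩
  rw [hf]
  conv_lhs => rw [hpC, hqX]
  rw [C_mul]; ring

end Finish
end Q2Lines

namespace Q2Lines
set_option linter.unusedSectionVars false
set_option linter.unusedVariables false
section Curves

variable {k : Type*} [Field k]

theorem nu_surjective {x : Polynomial k} (hx : x.Monic) (hdeg : 0 < x.natDegree) :
    Function.Surjective ((ee x).comp (jj k)) := by
  set S := ((ee x).comp (jj k)).range with hS
  have hxS : x ∈ S := ⟨xA k, by simp⟩
  have hzS : x * Polynomial.X ∈ S := ⟨zA k, by simp⟩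
  have hyS : Polynomial.X + x * Polynomial.X ^ 2 ∈ S := ⟨yA k, by simp⟩
  set r := x.natDegree with hr
  have base : ∀ (d : ℕ) (q : Polynomial k), q.natDegree ≤ d → x ^ r * q ∈ S := by
    intro d
    induction d using Nat.strong_induction_on with
    | _ d ih =>
      have small : ∀ q : Polynomial k, q.natDegree < r → x ^ r * q ∈ S := by
        intro q hq
        rw [q.as_sum_range_C_mul_X_pow' hq, Finset.mul_sum]
        apply Subalgebra.sum_mem
        intro i hi
        rw [Finset.mem_range] at hi
        have e : x ^ r * (Polynomial.C (q.coeff i) * Polynomial.X ^ i) =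
            q.coeff i • (x ^ (r - i) * (x * Polynomial.X) ^ i) := by
          rw [Polynomial.smul_eq_C_mul, mul_pow]
          have : x ^ r = x ^ (r - i) * x ^ i := by rw [← pow_add]; congr 1; omega
          rw [this]; ring
        rw [e]
        exact S.smul_mem (S.mul_mem (S.pow_mem hxS _) (S.pow_mem hzS _)) _
      intro q hq
      by_cases hqr : q.natDegree < r
      · exact small q hqr
      · have e := Polynomial.modByMonic_add_div q x
        have h1 : x ^ r * q = x ^ r * (q %ₘ x) + x * (x ^ r * (q /ₘ x)) := by
          conv_lhs => rw [← e]
          ring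
        rw [h1]
        refine S.add_mem (small _ ?_) (S.mul_mem hxS (ih (d - 1) (by omega) _ ?_))
        · apply Polynomial.natDegree_modByMonic_lt _ hx
          rintro rfl
          simp at hr; omega
        · rw [Polynomial.natDegree_divByMonic q hx]; omega
  have descent : ∀ N : ℕ, (∀ q, x ^ N * q ∈ S) → ∀ q, q ∈ S := by
    intro N
    induction N with
    | zero => intro h q; simpa using h q
    | succ N ih =>
      intro h
      apply ih
      intro q
      set y : Polynomial k := Polynomial.X + x * Polynomial.X ^ 2 with hy
      have h1 : y - Polynomial.X ∣ q.comp y - q := by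
        have := Polynomial.sub_dvd_eval_sub y Polynomial.X (q.map Polynomial.C)
        rw [Polynomial.eval_map, Polynomial.eval_map] at this
        change _ ∣ q.comp y - q.comp Polynomial.X at this
        rwa [Polynomial.comp_X] at this
      obtain ⟨w, hw⟩ := h1
      have h2 : x ^ N * q = x ^ N * q.comp y - x ^ (N + 1) * (Polynomial.X ^ 2 * w) := by
        have : q = q.comp y - (y - Polynomial.X) * w := by rw [← hw]; ring
        conv_lhs => rw [this]
        rw [hy]; ring
      rw [h2]
      refine S.sub_mem (S.mul_mem (S.pow_mem hxS _) ?_) (h _)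
      have h3 : q.comp y = Polynomial.aeval y q := by
        rw [Polynomial.comp, Polynomial.aeval_def]; rfl
      rw [h3]
      exact Polynomial.aeval_mem_adjoin_singleton k y |> fun h => 
        (Algebra.adjoin_le (by simpa using hyS) : Algebra.adjoin k {y} ≤ S) h
  intro q
  exact descent r (fun q => base _ q le_rfl) q

variable (k) in
def xr (n : ℕ) : Polynomial k := Polynomial.X ^ (2 * n + 3) * (Polynomial.X - Polynomial.C 1)

theorem xr_monic (n : ℕ) : (xr k n).Monic :=
  (Polynomial.monic_X_pow _).mul (Polynomial.monic_X_sub_C 1)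

theorem xr_deg (n : ℕ) : (xr k n).natDegree = 2 * (n + 2) := by
  rw [xr, (Polynomial.monic_X_pow _).natDegree_mul (Polynomial.monic_X_sub_C 1),
    Polynomial.natDegree_X_pow, Polynomial.natDegree_X_sub_C]
  ring

variable (k) in
def nu (n : ℕ) : Q2Ring k →ₐ[k] Polynomial k := (ee (xr k n)).comp (jj k)

theorem nu_x (n : ℕ) : nu k n (xA k) = xr k n := by simp [nu]

theorem beta_apply (β : Polynomial k ≃ₐ[k] Polynomial k) (p : Polynomial k) :
    β p = p.comp (β Polynomial.X) := by
  have h := Polynomial.aeval_algHom_apply (β : Polynomial k →ₐ[k] Polynomial k) Polynomial.X p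
  rw [Polynomial.aeval_X_left_apply] at h
  have h3 : p.comp (β Polynomial.X) = Polynomial.aeval (β Polynomial.X) p := by
    rw [Polynomial.comp, Polynomial.aeval_def]; rfl
  rw [h3]
  exact h.symm

theorem beta_deg_X (β : Polynomial k ≃ₐ[k] Polynomial k) : (β Polynomial.X).natDegree = 1 := by
  have h := congrArg Polynomial.natDegree (β.apply_symm_apply Polynomial.X)
  rw [beta_apply β, Polynomial.natDegree_comp, Polynomial.natDegree_X] at h
  exact Nat.eq_one_of_mul_eq_one_left h

theorem beta_deg (β : Polynomial k ≃ₐ[k] Polynomial k) (p : Polynomial k) :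
    (β p).natDegree = p.natDegree := by
  rw [beta_apply, Polynomial.natDegree_comp, beta_deg_X, mul_one]

theorem compare {m n : ℕ} (α : Q2Ring k ≃ₐ[k] Q2Ring k) (β : Polynomial k ≃ₐ[k] Polynomial k)
    (h : ∀ a, nu k n (α a) = β (nu k m a)) :
    n ≤ m ∧ (m = n → ∃ c : k, jj k (α (xA k)) = C c * X 0) := by
  have hd : (ee (xr k n) (jj k (α (xA k)))).natDegree = 2 * (m + 2) := by
    have := congrArg Polynomial.natDegree (h (xA k))
    rw [beta_deg, nu_x, xr_deg] at this
    exact this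
  obtain ⟨h1, h2⟩ := main_deg α (r := 2 * (n + 2)) (ρ := n + 2) rfl (by omega) (xr_monic n) (xr_deg n)
  rw [hd] at h1 h2
  refine ⟨by omega, fun e => h2 (by omega)⟩

theorem extend_id (n : ℕ) (α : Q2Ring k ≃ₐ[k] Q2Ring k) (β : Polynomial k ≃ₐ[k] Polynomial k)
    (h : ∀ a, nu k n (α a) = β (nu k n a)) : β = AlgEquiv.refl := by
  obtain ⟨c, hc⟩ := (compare α β h).2 rfl
  have h1 := h (xA k)
  rw [nu_x] at h1
  have h2 : nu k n (α (xA k)) = Polynomial.C c * xr k n := by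
    have : nu k n (α (xA k)) = ee (xr k n) (jj k (α (xA k))) := rfl
    rw [this, hc, map_mul, ee_X, ← MvPolynomial.algebraMap_eq, AlgHom.commutes]; rfl
  rw [h2, beta_apply, xr] at h1
  simp only [Polynomial.mul_comp, Polynomial.X_pow_comp, Polynomial.sub_comp, Polynomial.X_comp,
    Polynomial.C_comp] at h1
  have hd := beta_deg_X β
  have hb := Polynomial.eq_X_add_C_of_natDegree_le_one hd.le
  set b := β Polynomial.X with hbdef
  set u := b.coeff 1 with hu
  set v := b.coeff 0 with hv
  have hu0 : u ≠ 0 := by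
    rw [hu, ← hd]
    have : b.leadingCoeff ≠ 0 := by
      rw [Polynomial.leadingCoeff_ne_zero]
      rintro h0
      rw [h0] at hd; simp at hd
    exact this
  have e0 := congrArg (Polynomial.eval 0) h1
  have e1 := congrArg (Polynomial.eval 1) h1
  have e2 := congrArg (fun p => Polynomial.eval 0 (Polynomial.derivative p)) h1
  rw [hb] at e0 e1 e2
  simp [Polynomial.derivative_pow] at e0 e1 e2
  have hv0 : v = 0 := by
    rcases e0 with e0 | e0
    · exact e0
    · exfalso
      have hv1 : v = 1 := sub_eq_zero.1 e0
      rw [hv1] at e2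
      simp at e2
      exact hu0 e2.symm
  have hu1 : u = 1 := by
    rw [hv0] at e1
    simp at e1
    rcases e1 with e1 | e1
    · exact absurd e1 hu0
    · exact sub_eq_zero.1 e1
  have hbX : b = Polynomial.X := by rw [hb, hu1, hv0]; simp
  ext1 p
  rw [beta_apply, ← hbdef, hbX, Polynomial.comp_X]; rfl

theorem not_equiv {m n : ℕ} (α : Q2Ring k ≃ₐ[k] Q2Ring k)
    (h : Ideal.map α (RingHom.ker (nu k m)) = RingHom.ker (nu k n)) : m = n := by
  have sm : ∀ n, Function.Surjective (nu k n) := fun n =>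
    nu_surjective (xr_monic n) (by rw [xr_deg]; omega)
  let β : Polynomial k ≃ₐ[k] Polynomial k :=
    ((Ideal.quotientKerAlgEquivOfSurjective (sm m)).symm.trans
      (Ideal.quotientEquivAlg _ _ α h.symm)).trans
      (Ideal.quotientKerAlgEquivOfSurjective (sm n))
  have hβ : ∀ a, nu k n (α a) = β (nu k m a) := by
    intro a
    have e : (Ideal.quotientKerAlgEquivOfSurjective (sm m)).symm (nu k m a) =
        Ideal.Quotient.mk _ a := by
      rw [AlgEquiv.symm_apply_eq]
      rfl
    simp only [β, AlgEquiv.trans_apply, e]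
    rfl
  have hβ' : ∀ a, nu k m (α.symm a) = β.symm (nu k n a) := by
    intro a
    rw [AlgEquiv.eq_symm_apply, ← hβ, AlgEquiv.apply_symm_apply]
  exact le_antisymm (compare α.symm β.symm hβ').1 (compare α β hβ).1

end Curves
end Q2Lines

/-- **Theorem 1 (Blanc–van Santen).** Over any field `k`, there is an infinite sequence of
closed embeddings `ν_n : 𝔸¹ ↪ Q₂` (i.e. surjective `k`-algebra homomorphisms `A → k[T]`)
whose images are pairwise non-equivalent under automorphisms of `Q₂`, and such that the
identity is the only automorphism of each image curve extending to an automorphism of `Q₂`. -/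
theorem infinitely_many_nonequivalent_lines_in_Q2 (k : Type*) [Field k] :
    ∃ ν : ℕ → (Q2Ring k →ₐ[k] Polynomial k),
      (∀ n, Function.Surjective (ν n)) ∧
      (∀ m n, m ≠ n →
        ¬ ∃ α : Q2Ring k ≃ₐ[k] Q2Ring k,
            Ideal.map α (RingHom.ker (ν m)) = RingHom.ker (ν n)) ∧
      (∀ (n : ℕ) (α : Q2Ring k ≃ₐ[k] Q2Ring k) (β : Polynomial k ≃ₐ[k] Polynomial k),
          β.toAlgHom.comp (ν n) = (ν n).comp α.toAlgHom → β = AlgEquiv.refl) := by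
  refine ⟨Q2Lines.nu k, fun n => Q2Lines.nu_surjective (Q2Lines.xr_monic n)
    (by rw [Q2Lines.xr_deg]; omega), ?_, ?_⟩
  · rintro m n hmn ⟨α, h⟩
    exact hmn (Q2Lines.not_equiv α h)
  · intro n α β h
    exact Q2Lines.extend_id n α β fun a => (DFunLike.congr_fun h a).symm
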